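/- For an extension B ⊆ A of k-algebras and an A-bimodule X, there is a fundamental short sequence of chain complexes 0 → Č_*(B,X) →^ι Č_*(A,X) →^κ Č_*(A|B,X) → 0 in which ι is induced by the inclusion B ⊆ A and κ by π, such that: ι and κ are chain maps (in particular κ maps Ker b_A into Ker b_{A|B} in degree 1), ι is injective in every degree, κ∘ι = 0 in every degree, and κ is surjective in every degree n ≥ 2 (though not necessarily in degree 1). -/

import Mathlib

open scoped TensorProduct
open MulOpposite PiTensorProduct

namespace JZH

variable (k : Type) [Field k]
variable (A : Type) [Ring A] [Algebra k A] (B : Subalgebra k A)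
variable (X : Type) [AddCommGroup X] [Module k X]
  [Module A X] [Module Aᵐᵒᵖ X] [SMulCommClass A Aᵐᵒᵖ X]
  [IsScalarTower k A X] [IsScalarTower k Aᵐᵒᵖ X]

/-- The quotient `B`-bimodule `A/B`. -/
abbrev QM : Type := A ⧸ (Subalgebra.toSubmodule B)

/-- The canonical projection `π : A → A/B`. -/
noncomputable def πQ : A →ₗ[k] QM k A B := (Subalgebra.toSubmodule B).mkQ

/-- The left action of `b ∈ B` on `A/B`, induced by left multiplication. -/
noncomputable def Ql (b : B) : QM k A B →ₗ[k] QM k A B :=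
  Submodule.mapQ _ _ (LinearMap.mulLeft k (b : A))
    (fun a ha => by
      simp only [Submodule.mem_comap, LinearMap.mulLeft_apply, Subalgebra.mem_toSubmodule] at *
      exact B.mul_mem b.2 ha)

/-- The right action of `b ∈ B` on `A/B`, induced by right multiplication. -/
noncomputable def Qr (b : B) : QM k A B →ₗ[k] QM k A B :=
  Submodule.mapQ _ _ (LinearMap.mulRight k (b : A))
    (fun a ha => by
      simp only [Submodule.mem_comap, LinearMap.mulRight_apply, Subalgebra.mem_toSubmodule] at *
      exact B.mul_mem ha b.2)

/-- Merging of two adjacent entries of a tuple, using a given "product". -/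
def mergeFun {M : Type} (mul : M → M → M) {n : ℕ} (a : Fin (n+1) → M) (j : Fin n) :
    Fin n → M := fun l =>
  if (l : ℕ) < (j : ℕ) then a l.castSucc
  else if (l : ℕ) = (j : ℕ) then mul (a l.castSucc) (a l.succ)
  else a l.succ

/-- Degree-`n` term of the Hochschild chain complex of `A` with coefficients in `X`. -/
def CH : ℕ → Type
  | 0 => X
  | n + 1 => X ⊗[k] (⨂[k] (_ : Fin (n+1)), A)

noncomputable instance CHacg : ∀ n, AddCommGroup (CH k A X n)
  | 0 => inferInstanceAs (AddCommGroup X)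
  | n + 1 => inferInstanceAs (AddCommGroup (X ⊗[k] (⨂[k] (_ : Fin (n+1)), A)))

noncomputable instance CHmod : ∀ n, Module k (CH k A X n)
  | 0 => inferInstanceAs (Module k X)
  | n + 1 => inferInstanceAs (Module k (X ⊗[k] (⨂[k] (_ : Fin (n+1)), A)))

/-- The Hochschild boundary formula in lowest degree: `b(x ⊗ a) = x·a − a·x`. -/
def hochZero (x : X) (a : Fin 1 → A) : CH k A X 0 :=
  (op (a 0) • x) - (a 0 • x)

/-- The Hochschild boundary formula on elementary tensors,
`b(x ⊗ a₁ ⊗ ⋯ ⊗ a_{n+2}) = x·a₁ ⊗ a₂ ⊗ ⋯ + Σ (−1)^i x ⊗ ⋯ ⊗ a_i a_{i+1} ⊗ ⋯ +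
(−1)^{n+2} a_{n+2}·x ⊗ a₁ ⊗ ⋯ ⊗ a_{n+1}`. -/
noncomputable def hochSucc (n : ℕ) (x : X) (a : Fin (n+2) → A) : CH k A X (n+1) :=
  (op (a 0) • x) ⊗ₜ[k] (tprod k fun i : Fin (n+1) => a i.succ)
  + ∑ j : Fin (n+1), ((-1 : ℤ) ^ ((j : ℕ) + 1)) •
      (x ⊗ₜ[k] (tprod k (mergeFun (fun y z => y * z) a j)))
  + ((-1 : ℤ) ^ (n + 2)) •
      ((a (Fin.last (n+1)) • x) ⊗ₜ[k] (tprod k fun i : Fin (n+1) => a i.castSucc))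

/-- `d` is the family of Hochschild differentials of `A` with coefficients in `X`. -/
def IsHochschildDiff (d : ∀ n, CH k A X (n+1) →ₗ[k] CH k A X n) : Prop :=
  (∀ (x : X) (a : Fin 1 → A), d 0 (x ⊗ₜ[k] tprod k a) = hochZero k A X x a) ∧
  (∀ (n : ℕ) (x : X) (a : Fin (n+2) → A),
    d (n+1) (x ⊗ₜ[k] tprod k a) = hochSucc k A X n x a)

/-- Degree-`n` term of the Hochschild chain complex of the subalgebra `B` with
coefficients in `X`. -/
def CHB : ℕ → Type
  | 0 => X
  | n + 1 => X ⊗[k] (⨂[k] (_ : Fin (n+1)), B)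

noncomputable instance CHBacg : ∀ n, AddCommGroup (CHB k A B X n)
  | 0 => inferInstanceAs (AddCommGroup X)
  | n + 1 => inferInstanceAs (AddCommGroup (X ⊗[k] (⨂[k] (_ : Fin (n+1)), B)))

noncomputable instance CHBmod : ∀ n, Module k (CHB k A B X n)
  | 0 => inferInstanceAs (Module k X)
  | n + 1 => inferInstanceAs (Module k (X ⊗[k] (⨂[k] (_ : Fin (n+1)), B)))

/-- Hochschild boundary formula for `B`, lowest degree. -/
def hochBZero (x : X) (b : Fin 1 → B) : CHB k A B X 0 :=
  (op ((b 0 : A)) • x) - ((b 0 : A) • x)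

/-- Hochschild boundary formula for `B` on elementary tensors. -/
noncomputable def hochBSucc (n : ℕ) (x : X) (b : Fin (n+2) → B) : CHB k A B X (n+1) :=
  (op ((b 0 : A)) • x) ⊗ₜ[k] (tprod k fun i : Fin (n+1) => b i.succ)
  + ∑ j : Fin (n+1), ((-1 : ℤ) ^ ((j : ℕ) + 1)) •
      (x ⊗ₜ[k] (tprod k (mergeFun (fun y z => y * z) b j)))
  + ((-1 : ℤ) ^ (n + 2)) •
      (((b (Fin.last (n+1)) : A) • x) ⊗ₜ[k] (tprod k fun i : Fin (n+1) => b i.castSucc))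

/-- `d` is the family of Hochschild differentials of `B` with coefficients in `X`. -/
def IsHochschildDiffB (d : ∀ n, CHB k A B X (n+1) →ₗ[k] CHB k A B X n) : Prop :=
  (∀ (x : X) (b : Fin 1 → B), d 0 (x ⊗ₜ[k] tprod k b) = hochBZero k A B X x b) ∧
  (∀ (n : ℕ) (x : X) (b : Fin (n+2) → B),
    d (n+1) (x ⊗ₜ[k] tprod k b) = hochBSucc k A B X n x b)

/-- The subspace of `X` spanned by the commutators `b·x − x·b`, `b ∈ B`;
the quotient is `X_B`. -/
def commRel : Submodule k X :=
  Submodule.span k {z : X | ∃ (b : B) (x : X), z = (b : A) • x - op (b : A) • x}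

/-- The balancing relations defining `X ⊗_{Bᵉ} (A/B)^{⊗_B (n+1)}` inside
`X ⊗[k] (A/B)^{⊗[k] (n+1)}`. -/
def relRel (n : ℕ) : Submodule k (X ⊗[k] (⨂[k] (_ : Fin (n+1)), QM k A B)) :=
  Submodule.span k
    ({z | ∃ (x : X) (α : Fin (n+1) → QM k A B) (b : B),
        z = (op (b : A) • x) ⊗ₜ[k] tprod k α
            - x ⊗ₜ[k] tprod k (Function.update α 0 (Ql k A B b (α 0)))} ∪
     {z | ∃ (x : X) (α : Fin (n+1) → QM k A B) (b : B) (i : Fin n),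
        z = x ⊗ₜ[k] tprod k (Function.update α i.castSucc (Qr k A B b (α i.castSucc)))
            - x ⊗ₜ[k] tprod k (Function.update α i.succ (Ql k A B b (α i.succ)))} ∪
     {z | ∃ (x : X) (α : Fin (n+1) → QM k A B) (b : B),
        z = x ⊗ₜ[k] tprod k (Function.update α (Fin.last n) (Qr k A B b (α (Fin.last n))))
            - ((b : A) • x) ⊗ₜ[k] tprod k α})

/-- Degree-`n` term of the relative Hochschild chain complex `C_*(A|B,X)`:
`X_B` in degree `0` and `X ⊗_{Bᵉ} (A/B)^{⊗_B n}` in degree `n ≥ 1`. -/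
def RC : ℕ → Type
  | 0 => X ⧸ commRel k A B X
  | n + 1 => (X ⊗[k] (⨂[k] (_ : Fin (n+1)), QM k A B)) ⧸ relRel k A B X n

noncomputable instance RCacg : ∀ n, AddCommGroup (RC k A B X n)
  | 0 => inferInstanceAs (AddCommGroup (_ ⧸ _))
  | n + 1 => inferInstanceAs (AddCommGroup (_ ⧸ _))

noncomputable instance RCmod : ∀ n, Module k (RC k A B X n)
  | 0 => inferInstanceAs (Module k (_ ⧸ _))
  | n + 1 => inferInstanceAs (Module k (_ ⧸ _))

/-- Class of an element of `X ⊗[k] (A/B)^{⊗ (n+1)}` in the relative chain module. -/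
noncomputable def mkRC (n : ℕ) :
    (X ⊗[k] (⨂[k] (_ : Fin (n+1)), QM k A B)) →ₗ[k] RC k A B X (n+1) :=
  (relRel k A B X n).mkQ

/-- Class of an element of `X` in `X_B`. -/
noncomputable def mkXB : X →ₗ[k] RC k A B X 0 := (commRel k A B X).mkQ

variable (σ : QM k A B →ₗ[k] A)

/-- Relative Hochschild boundary formula, lowest degree:
`b(x ⊗ α) = x·σ(α) − σ(α)·x` (with values in `X`, before passing to `X_B`). -/
def relZero (x : X) (α : Fin 1 → QM k A B) : X :=
  (op (σ (α 0)) • x) - (σ (α 0) • x)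

/-- Relative Hochschild boundary formula on elementary tensors (values in
`X ⊗[k] (A/B)^{⊗(n+1)}`, before passing to the quotient). -/
noncomputable def relSucc (n : ℕ) (x : X) (α : Fin (n+2) → QM k A B) :
    X ⊗[k] (⨂[k] (_ : Fin (n+1)), QM k A B) :=
  (op (σ (α 0)) • x) ⊗ₜ[k] (tprod k fun i : Fin (n+1) => α i.succ)
  + ∑ j : Fin (n+1), ((-1 : ℤ) ^ ((j : ℕ) + 1)) •
      (x ⊗ₜ[k] (tprod k (mergeFun (fun y z => πQ k A B (σ y * σ z)) α j)))
  + ((-1 : ℤ) ^ (n + 2)) •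
      ((σ (α (Fin.last (n+1))) • x) ⊗ₜ[k] (tprod k fun i : Fin (n+1) => α i.castSucc))

/-- `d` is the family of relative Hochschild differentials, for the section `σ`. -/
def IsRelDiff (d : ∀ n, RC k A B X (n+1) →ₗ[k] RC k A B X n) : Prop :=
  (∀ (x : X) (α : Fin 1 → QM k A B),
    d 0 (mkRC k A B X 0 (x ⊗ₜ[k] tprod k α)) = mkXB k A B X (relZero k A B X σ x α)) ∧
  (∀ (n : ℕ) (x : X) (α : Fin (n+2) → QM k A B),
    d (n+1) (mkRC k A B X (n+1) (x ⊗ₜ[k] tprod k α)) =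
      mkRC k A B X n (relSucc k A B X σ n x α))

/-- The chain map `κ : C_*(A,X) → C_*(A|B,X)` induced by `π`. -/
noncomputable def κmap : ∀ n, CH k A X n →ₗ[k] RC k A B X n
  | 0 => mkXB k A B X
  | n + 1 => (mkRC k A B X n).comp
      (TensorProduct.map LinearMap.id (PiTensorProduct.map fun _ => πQ k A B))

/-- The chain map `ι : C_*(B,X) → C_*(A,X)` induced by the inclusion `B ⊆ A`. -/
noncomputable def ιmap : ∀ n, CHB k A B X n →ₗ[k] CH k A X n
  | 0 => LinearMap.id
  | n + 1 => TensorProduct.map LinearMap.id (PiTensorProduct.map fun _ => B.val.toLinearMap)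

end JZH

/-!
Fix a tensor `x ⊗ a₁ ⊗ ⋯ ⊗ a_{n+1}` with `a_i ∈ B`. In `C_*(A|B,X)` every face keeping the entry
`a_i` vanishes; only the two faces that multiply `a_i` into a neighbour remain. They carry opposite
signs and are identified by a balancing relation over `B` (by a relation of `X_B` in degree `0`).
Hence `κ ∘ b_A` depends only on the entries modulo `B`, so each `a_j` may be replaced by
`σ (π a_j)`, and for such entries the formulas for `b_A` and `b_{A|B}` agree.

Over a field the inclusion `B ⊆ A` has a linear retraction and `π` a linear section. They induce a
retraction of `ι` and a section of `X ⊗ A^{⊗n} → X ⊗ (A/B)^{⊗n}`, whence injectivity and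
surjectivity.
-/

namespace JZH

section Tuples

variable {α β : Type*} {n : ℕ}

theorem contractNth_castSucc_eq_update_removeNth_castSucc (op : α → α → α)
    (g : Fin (n + 1) → α) (m : Fin n) :
    Fin.contractNth m.castSucc op g =
      Function.update (m.castSucc.removeNth g) m (op (g m.castSucc) (g m.succ)) := by
  funext l
  obtain rfl | hl := eq_or_ne l m
  · rw [Function.update_self, Fin.contractNth_apply_of_eq _ _ _ _ rfl]
  · rw [Function.update_of_ne hl,
      Fin.contractNth_apply_of_ne _ _ _ _ fun h => hl (Fin.ext h.symm), Fin.removeNth_apply]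

theorem contractNth_castSucc_eq_update_removeNth_succ (op : α → α → α)
    (g : Fin (n + 1) → α) (m : Fin n) :
    Fin.contractNth m.castSucc op g =
      Function.update (m.succ.removeNth g) m (op (g m.castSucc) (g m.succ)) := by
  rw [contractNth_castSucc_eq_update_removeNth_castSucc]
  funext l
  obtain rfl | hl := eq_or_ne l m
  · simp only [Function.update_self]
  · rw [Function.update_of_ne hl, Function.update_of_ne hl, Fin.removeNth_apply,
      Fin.removeNth_apply]
    congr 1
    rcases hl.lt_or_gt with h | h
    · rw [Fin.succAbove_castSucc_of_lt _ _ h, Fin.succAbove_succ_of_le _ _ h.le]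
    · rw [Fin.succAbove_castSucc_of_le _ _ h.le, Fin.succAbove_succ_of_lt _ _ h]

theorem comp_contractNth {f : α → β} {op : α → α → α} {op' : β → β → β}
    {g : Fin (n + 1) → α} (h : ∀ i j, f (op (g i) (g j)) = op' (f (g i)) (f (g j)))
    (j : Fin (n + 1)) :
    f ∘ Fin.contractNth j op g = Fin.contractNth j op' (f ∘ g) := by
  funext l
  simp only [Function.comp_apply, Fin.contractNth]
  split_ifs <;> simp only [h]

theorem mergeFun_eq_contractNth {M : Type} (mul : M → M → M) (a : Fin (n + 1) → M)
    (j : Fin n) : mergeFun mul a j = Fin.contractNth j.castSucc mul a :=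
  rfl

theorem contractNth_last (op : α → α → α) (g : Fin (n + 1) → α) :
    Fin.contractNth (Fin.last n) op g = Fin.init g :=
  funext fun l => Fin.contractNth_apply_of_lt _ _ _ _ l.isLt

/-- The tuples occurring in the faces of `a₁ ⊗ ⋯ ⊗ a_{n+2}`. The face of index `0` drops the first
entry and the face of index `n + 2` the last one; in between, the face of index `j` merges `a_j`
with `a_{j+1}`. The two faces that involve the entry `a i` are those of index `i.castSucc` and
`i.succ`. -/
def faceTuple (mul : α → α → α) (a : Fin (n + 2) → α) : Fin (n + 3) → Fin (n + 1) → α :=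
  Fin.cons (Fin.tail a) fun j => Fin.contractNth j mul a

theorem comp_faceTuple {f : α → β} {mul : α → α → α} {mul' : β → β → β} {a : Fin (n + 2) → α}
    (h : ∀ i j, f (mul (a i) (a j)) = mul' (f (a i)) (f (a j))) (j : Fin (n + 3)) :
    f ∘ faceTuple mul a j = faceTuple mul' (f ∘ a) j := by
  cases j using Fin.cases with
  | zero => rfl
  | succ j => exact comp_contractNth h j

theorem exists_faceTuple_apply_eq (mul : α → α → α) (a : Fin (n + 2) → α) {i : Fin (n + 2)}
    {j : Fin (n + 3)} (hj : j ≠ i.castSucc) (hj' : j ≠ i.succ) :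
    ∃ l, faceTuple mul a j l = a i := by
  cases j using Fin.cases with
  | zero =>
    have hi : i ≠ 0 := by rintro rfl; exact hj rfl
    exact ⟨i.pred hi, congrArg a (Fin.succ_pred i hi)⟩
  | succ p =>
    obtain ⟨l, rfl⟩ := Fin.exists_succAbove_eq (x := i) (y := p) fun h => hj' (h ▸ rfl)
    refine ⟨l, Fin.contractNth_apply_of_ne _ _ _ _ fun h => hj ?_⟩
    obtain rfl : p = l.castSucc := Fin.ext h
    rw [Fin.succAbove_castSucc_self, Fin.castSucc_succ]

/-- The coefficients of the faces of `x ⊗ a₁ ⊗ ⋯ ⊗ a_{n+2}`: only the two outer faces act on `x`.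
Their coefficients `y` and `z` (`x·a₁` and `a_{n+2}·x` in the Hochschild boundary) are independent
parameters, so that the formulas for `b_A`, `b_B` and `b_{A|B}` are all instances. -/
def faceCoeff (y x z : α) : Fin (n + 3) → α :=
  Fin.cons y (Fin.snoc (fun _ => x) z)

end Tuples

theorem alternatingSum_mem_of_adjacent {M : Type*} [AddCommGroup M] {S : AddSubgroup M} {n : ℕ}
    {f : Fin (n + 1) → M} (i : Fin n) (hf : ∀ j, j ≠ i.castSucc → j ≠ i.succ → f j ∈ S)
    (hi : f i.castSucc - f i.succ ∈ S) :
    ∑ j : Fin (n + 1), (-1 : ℤ) ^ (j : ℕ) • f j ∈ S := by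
  have hne : i.castSucc ≠ i.succ := Fin.castSucc_lt_succ.ne
  have hpair : ∑ j ∈ ({i.castSucc, i.succ} : Finset (Fin (n + 1))), (-1 : ℤ) ^ (j : ℕ) • f j =
      (-1 : ℤ) ^ (i : ℕ) • (f i.castSucc - f i.succ) := by
    rw [Finset.sum_pair hne, Fin.val_castSucc, Fin.val_succ, pow_succ, mul_neg_one, neg_smul,
      smul_sub, sub_eq_add_neg]
  rw [← Finset.sum_add_sum_compl {i.castSucc, i.succ}, hpair]
  refine S.add_mem (S.zsmul_mem hi _) (S.sum_mem fun j hj => S.zsmul_mem ?_ _)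
  simp only [Finset.mem_compl, Finset.mem_insert, Finset.mem_singleton, not_or] at hj
  exact hf j hj.1 hj.2

section Tensors

variable {R : Type*} [CommRing R] {X V W M : Type*} [AddCommGroup X] [Module R X]
  [AddCommGroup V] [Module R V] [AddCommGroup W] [Module R W] [AddCommGroup M] [Module R M]

theorem tmul_tprod_hom_ext {ι : Type*} {f g : X ⊗[R] (⨂[R] _ : ι, V) →ₗ[R] M}
    (h : ∀ x a, f (x ⊗ₜ tprod R a) = g (x ⊗ₜ tprod R a)) : f = g :=
  TensorProduct.ext <| LinearMap.ext fun x => PiTensorProduct.ext <| MultilinearMap.ext (h x)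

theorem tmul_tprod_eq_zero {ι : Type*} (x : X) {a : ι → V} {i : ι} (h : a i = 0) :
    x ⊗ₜ[R] tprod R a = 0 := by
  have ha : tprod R a = 0 := MultilinearMap.map_coord_zero (tprod R) i h
  rw [ha, TensorProduct.tmul_zero]

theorem multilinearMap_congr_of_sub_mem {ι : Type*} [Finite ι]
    (f : MultilinearMap R (fun _ : ι => V) M) {S : Set V}
    (hf : ∀ a i, a i ∈ S → f a = 0) {a c : ι → V} (hac : ∀ i, a i - c i ∈ S) : f a = f c := by
  classical
  have := Fintype.ofFinite ι
  let := linearOrderOfSTO (WellOrderingRel (α := ι))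
  have htel := f.map_sub_map_piecewise a c Finset.univ
  rw [Finset.piecewise_univ] at htel
  refine sub_eq_zero.1 (htel.trans (Finset.sum_eq_zero fun i _ => hf _ i ?_))
  simpa using hac i

theorem map_tmul_tprod_congr_of_sub_mem {ι : Type*} [Finite ι]
    (f : X ⊗[R] (⨂[R] _ : ι, V) →ₗ[R] M) (x : X) {S : Set V}
    (hf : ∀ a i, a i ∈ S → f (x ⊗ₜ tprod R a) = 0) {a c : ι → V} (hac : ∀ i, a i - c i ∈ S) :
    f (x ⊗ₜ tprod R a) = f (x ⊗ₜ tprod R c) :=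
  multilinearMap_congr_of_sub_mem ((f ∘ₗ TensorProduct.mk R X _ x).compMultilinearMap (tprod R))
    hf hac

variable (X) in
/-- The map `X ⊗ V^{⊗ι} → X ⊗ W^{⊗ι}` induced by a linear map `V → W`; both `ι` and `κ` arise from
it. -/
noncomputable def tensorPowerMap (ι : Type*) (f : V →ₗ[R] W) :
    X ⊗[R] (⨂[R] _ : ι, V) →ₗ[R] X ⊗[R] (⨂[R] _ : ι, W) :=
  TensorProduct.map LinearMap.id (PiTensorProduct.map fun _ => f)

@[simp]
theorem tensorPowerMap_tmul_tprod {ι : Type*} (f : V →ₗ[R] W) (x : X) (a : ι → V) :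
    tensorPowerMap X ι f (x ⊗ₜ tprod R a) = x ⊗ₜ tprod R (f ∘ a) := by
  rw [tensorPowerMap, TensorProduct.map_tmul, PiTensorProduct.map_tprod]
  rfl

theorem tensorPowerMap_leftInverse (ι : Type*) {f : V →ₗ[R] W} {g : W →ₗ[R] V}
    (h : g ∘ₗ f = LinearMap.id) :
    Function.LeftInverse (tensorPowerMap X ι g) (tensorPowerMap X ι f) := by
  refine LinearMap.congr_fun (f := tensorPowerMap X ι g ∘ₗ tensorPowerMap X ι f)
    (g := LinearMap.id) (tmul_tprod_hom_ext fun x a => ?_)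
  have hgf : g ∘ f ∘ a = a := funext fun i => LinearMap.congr_fun h (a i)
  simp [hgf]

/-- The alternating sum of the faces of `x ⊗ a₁ ⊗ ⋯ ⊗ a_{n+2}`, with the coefficients `faceCoeff` on
the tuples `faceTuple`. -/
noncomputable def faceSum (R : Type*) [CommRing R] {X V : Type*} [AddCommGroup X] [Module R X]
    [AddCommGroup V] [Module R V] {n : ℕ} (mul : V → V → V) (y x z : X) (a : Fin (n + 2) → V) :
    X ⊗[R] (⨂[R] _ : Fin (n + 1), V) :=
  ∑ j : Fin (n + 3), (-1 : ℤ) ^ (j : ℕ) •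
    (faceCoeff y x z j ⊗ₜ tprod R (faceTuple mul a j))

theorem faceSum_eq_add_sum_mergeFun_add {V : Type} [AddCommGroup V] [Module R V] {n : ℕ}
    (mul : V → V → V) (y x z : X) (a : Fin (n + 2) → V) :
    faceSum R mul y x z a = y ⊗ₜ[R] tprod R (Fin.tail a)
      + ∑ j : Fin (n + 1), (-1 : ℤ) ^ ((j : ℕ) + 1) • (x ⊗ₜ[R] tprod R (mergeFun mul a j))
      + (-1 : ℤ) ^ (n + 2) • (z ⊗ₜ[R] tprod R (Fin.init a)) := by
  simp only [faceSum, faceCoeff, faceTuple, Fin.sum_univ_succ (n := n + 2),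
    Fin.sum_univ_castSucc (n := n + 1), Fin.cons_zero, Fin.cons_succ, Fin.snoc_castSucc,
    Fin.snoc_last, contractNth_last, mergeFun_eq_contractNth, Fin.val_zero, Fin.val_succ,
    Fin.val_castSucc, Fin.val_last, pow_zero, one_smul, add_assoc, Nat.reduceAdd]

theorem tensorPowerMap_faceSum {n : ℕ} (f : V →ₗ[R] W) {mul : V → V → V} {mul' : W → W → W}
    (y x z : X) {a : Fin (n + 2) → V}
    (h : ∀ i j, f (mul (a i) (a j)) = mul' (f (a i)) (f (a j))) :
    tensorPowerMap X _ f (faceSum R mul y x z a) = faceSum R mul' y x z (f ∘ a) := by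
  simp only [faceSum, map_sum, map_zsmul, tensorPowerMap_tmul_tprod, comp_faceTuple h]

end Tensors

section Quotient

variable {k : Type} [Field k] {A : Type} [Ring A] [Algebra k A] {B : Subalgebra k A}

@[simp]
theorem πQ_eq_zero_iff {a : A} : πQ k A B a = 0 ↔ a ∈ B := by
  simp [πQ]

theorem πQ_comp_contractNth_of_mem_left {n : ℕ} (a : Fin (n + 1) → A) (m : Fin n)
    (hm : a m.castSucc ∈ B) :
    πQ k A B ∘ Fin.contractNth m.castSucc (· * ·) a =
      Function.update (πQ k A B ∘ m.castSucc.removeNth a) m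
        (Ql k A B ⟨_, hm⟩ ((πQ k A B ∘ m.castSucc.removeNth a) m)) := by
  rw [contractNth_castSucc_eq_update_removeNth_castSucc, Function.comp_update,
    Function.comp_apply, Fin.removeNth_apply, Fin.succAbove_castSucc_self]
  rfl

theorem πQ_comp_contractNth_of_mem_right {n : ℕ} (a : Fin (n + 1) → A) (m : Fin n)
    (hm : a m.succ ∈ B) :
    πQ k A B ∘ Fin.contractNth m.castSucc (· * ·) a =
      Function.update (πQ k A B ∘ m.succ.removeNth a) m
        (Qr k A B ⟨_, hm⟩ ((πQ k A B ∘ m.succ.removeNth a) m)) := by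
  rw [contractNth_castSucc_eq_update_removeNth_succ, Function.comp_update,
    Function.comp_apply, Fin.removeNth_apply, Fin.succAbove_succ_self]
  rfl

end Quotient

section Boundary

variable {k : Type} [Field k] {A : Type} [Ring A] [Algebra k A] {B : Subalgebra k A}
  {X : Type} [AddCommGroup X] [Module k X] [Module A X] [Module Aᵐᵒᵖ X] {n : ℕ}

theorem hochSucc_eq_faceSum (x : X) (a : Fin (n + 2) → A) :
    hochSucc k A X n x a =
      faceSum k (· * ·) (op (a 0) • x) x (a (Fin.last (n + 1)) • x) a :=
  (faceSum_eq_add_sum_mergeFun_add ..).symm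

theorem hochBSucc_eq_faceSum (x : X) (b : Fin (n + 2) → B) :
    hochBSucc k A B X n x b =
      faceSum k (· * ·) (op (b 0 : A) • x) x ((b (Fin.last (n + 1)) : A) • x) b :=
  (faceSum_eq_add_sum_mergeFun_add ..).symm

theorem relSucc_eq_faceSum (σ : QM k A B →ₗ[k] A) (x : X) (α : Fin (n + 2) → QM k A B) :
    relSucc k A B X σ n x α = faceSum k (fun p q => πQ k A B (σ p * σ q))
      (op (σ (α 0)) • x) x (σ (α (Fin.last (n + 1))) • x) α :=
  (faceSum_eq_add_sum_mergeFun_add ..).symm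

variable (k B) in
/-- The face of index `j` of `x ⊗ a₁ ⊗ ⋯ ⊗ a_{n+2}`, with the entries projected to `A/B` but not
yet passed to the quotient by the balancing relations. -/
noncomputable def projFace (x : X) (a : Fin (n + 2) → A) (j : Fin (n + 3)) :
    X ⊗[k] (⨂[k] _ : Fin (n + 1), QM k A B) :=
  faceCoeff (op (a 0) • x) x (a (Fin.last (n + 1)) • x) j ⊗ₜ
    tprod k (πQ k A B ∘ faceTuple (· * ·) a j)

theorem tensorPowerMap_πQ_hochSucc (x : X) (a : Fin (n + 2) → A) :
    tensorPowerMap X _ (πQ k A B) (hochSucc k A X n x a) =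
      ∑ j : Fin (n + 3), (-1 : ℤ) ^ (j : ℕ) • projFace k B x a j := by
  rw [hochSucc_eq_faceSum]
  simp only [faceSum, map_sum, map_zsmul, tensorPowerMap_tmul_tprod, projFace]

theorem projFace_eq_zero_of_mem (x : X) {a : Fin (n + 2) → A} {i : Fin (n + 2)} (hi : a i ∈ B)
    {j : Fin (n + 3)} (hj : j ≠ i.castSucc) (hj' : j ≠ i.succ) : projFace k B x a j = 0 := by
  obtain ⟨l, hl⟩ := exists_faceTuple_apply_eq (· * ·) a hj hj'
  exact tmul_tprod_eq_zero _ (i := l) (by simpa [hl] using hi)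

theorem projFace_succ_castSucc (x : X) (a : Fin (n + 2) → A) (j : Fin (n + 1)) :
    projFace k B x a j.castSucc.succ =
      x ⊗ₜ tprod k (πQ k A B ∘ Fin.contractNth j.castSucc (· * ·) a) := by
  simp only [projFace, faceCoeff, faceTuple, Fin.cons_succ, Fin.snoc_castSucc]

theorem projFace_succ_castSucc_of_mem_left (x : X) (a : Fin (n + 2) → A) (j : Fin (n + 1))
    (hj : a j.castSucc ∈ B) :
    projFace k B x a j.castSucc.succ =
      x ⊗ₜ tprod k (Function.update (πQ k A B ∘ j.castSucc.removeNth a) j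
        (Ql k A B ⟨_, hj⟩ ((πQ k A B ∘ j.castSucc.removeNth a) j))) := by
  rw [projFace_succ_castSucc, πQ_comp_contractNth_of_mem_left a j hj]

theorem projFace_succ_castSucc_of_mem_right (x : X) (a : Fin (n + 2) → A) (j : Fin (n + 1))
    (hj : a j.succ ∈ B) :
    projFace k B x a j.castSucc.succ =
      x ⊗ₜ tprod k (Function.update (πQ k A B ∘ j.succ.removeNth a) j
        (Qr k A B ⟨_, hj⟩ ((πQ k A B ∘ j.succ.removeNth a) j))) := by
  rw [projFace_succ_castSucc, πQ_comp_contractNth_of_mem_right a j hj]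

theorem projFace_last (x : X) (a : Fin (n + 2) → A) :
    projFace k B x a (Fin.last (n + 2)) =
      (a (Fin.last (n + 1)) • x) ⊗ₜ tprod k (πQ k A B ∘ (Fin.last (n + 1)).removeNth a) := by
  rw [← Fin.succ_last]
  simp only [projFace, faceCoeff, faceTuple, Fin.cons_succ, Fin.snoc_last, contractNth_last,
    Fin.removeNth_last]

theorem projFace_zero (x : X) (a : Fin (n + 2) → A) :
    projFace k B x a 0 =
      (op (a 0) • x) ⊗ₜ tprod k (πQ k A B ∘ (0 : Fin (n + 2)).removeNth a) := by
  simp only [projFace, faceCoeff, faceTuple, Fin.cons_zero, Fin.removeNth_zero]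

theorem projFace_castSucc_sub_projFace_succ_mem_relRel (x : X) {a : Fin (n + 2) → A}
    {i : Fin (n + 2)} (hi : a i ∈ B) :
    projFace k B x a i.castSucc - projFace k B x a i.succ ∈ relRel k A B X n := by
  apply Submodule.subset_span
  cases i using Fin.cases with
  | zero =>
    exact Or.inl (Or.inl ⟨x, _, ⟨a 0, hi⟩, congrArg₂ (· - ·) (projFace_zero x a)
      (projFace_succ_castSucc_of_mem_left x a 0 hi)⟩)
  | succ i =>
    rw [Fin.castSucc_succ, projFace_succ_castSucc_of_mem_right x a i hi]
    cases i using Fin.lastCases with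
    | last => exact Or.inr ⟨x, _, ⟨_, hi⟩, congrArg _ (projFace_last x a)⟩
    | cast p =>
      exact Or.inl (Or.inr ⟨x, _, ⟨_, hi⟩, p,
        congrArg _ (projFace_succ_castSucc_of_mem_left x a p.succ hi)⟩)

theorem tensorPowerMap_πQ_hochSucc_mem_relRel (x : X) {a : Fin (n + 2) → A} {i : Fin (n + 2)}
    (hi : a i ∈ B) :
    tensorPowerMap X _ (πQ k A B) (hochSucc k A X n x a) ∈ relRel k A B X n := by
  rw [tensorPowerMap_πQ_hochSucc]
  refine alternatingSum_mem_of_adjacent (S := (relRel k A B X n).toAddSubgroup) i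
    (fun j hj hj' => ?_) (projFace_castSucc_sub_projFace_succ_mem_relRel x hi)
  rw [projFace_eq_zero_of_mem x hi hj hj']
  exact zero_mem _

end Boundary

section ChainMaps

variable {k : Type} [Field k] {A : Type} [Ring A] [Algebra k A] {B : Subalgebra k A}
  {X : Type} [AddCommGroup X] [Module k X]

theorem CH.hom_ext {n : ℕ} {M : Type*} [AddCommGroup M] [Module k M]
    {f g : CH k A X (n + 1) →ₗ[k] M}
    (h : ∀ x a, f (x ⊗ₜ[k] tprod k a) = g (x ⊗ₜ[k] tprod k a)) : f = g :=
  tmul_tprod_hom_ext (X := X) (V := A) h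

theorem CHB.hom_ext {n : ℕ} {M : Type*} [AddCommGroup M] [Module k M]
    {f g : CHB k A B X (n + 1) →ₗ[k] M}
    (h : ∀ x b, f (x ⊗ₜ[k] tprod k b) = g (x ⊗ₜ[k] tprod k b)) : f = g :=
  tmul_tprod_hom_ext (X := X) (V := B) h

theorem ιmap_succ_apply (n : ℕ) (z : CHB k A B X (n + 1)) :
    ιmap k A B X (n + 1) z = tensorPowerMap X _ B.val.toLinearMap z :=
  rfl

theorem ιmap_succ_tmul_tprod (n : ℕ) (x : X) (b : Fin (n + 1) → B) :
    ιmap k A B X (n + 1) (x ⊗ₜ[k] tprod k b) = x ⊗ₜ[k] tprod k (B.val ∘ b) :=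
  tensorPowerMap_tmul_tprod B.val.toLinearMap x b

theorem ιmap_injective (n : ℕ) : Function.Injective (ιmap k A B X n) := by
  cases n with
  | zero => exact Function.injective_id
  | succ n =>
    obtain ⟨g, hg⟩ := B.val.toLinearMap.exists_leftInverse_of_injective
      (LinearMap.ker_eq_bot.2 Subtype.val_injective)
    exact (tensorPowerMap_leftInverse _ hg).injective

variable [Module A X] [Module Aᵐᵒᵖ X]

theorem κmap_succ_apply (n : ℕ) (z : CH k A X (n + 1)) :
    κmap k A B X (n + 1) z = mkRC k A B X n (tensorPowerMap X _ (πQ k A B) z) :=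
  rfl

theorem κmap_succ_tmul_tprod (n : ℕ) (x : X) (a : Fin (n + 1) → A) :
    κmap k A B X (n + 1) (x ⊗ₜ[k] tprod k a) =
      mkRC k A B X n (x ⊗ₜ tprod k (πQ k A B ∘ a)) :=
  congrArg (mkRC k A B X n) (tensorPowerMap_tmul_tprod (πQ k A B) x a)

theorem κmap_surjective (n : ℕ) : Function.Surjective (κmap k A B X n) := by
  cases n with
  | zero => exact Submodule.mkQ_surjective _
  | succ n =>
    obtain ⟨s, hs⟩ := (πQ k A B).exists_rightInverse_of_surjective
      (LinearMap.range_eq_top.2 (Submodule.mkQ_surjective _))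
    exact (Submodule.mkQ_surjective _).comp (tensorPowerMap_leftInverse _ hs).surjective

theorem κmap_comp_ιmap_succ (n : ℕ) :
    κmap k A B X (n + 1) ∘ₗ ιmap k A B X (n + 1) = 0 := by
  refine CHB.hom_ext fun x b => ?_
  have hb : x ⊗ₜ[k] tprod k (πQ k A B ∘ B.val ∘ b) = 0 :=
    tmul_tprod_eq_zero x (i := 0) (πQ_eq_zero_iff.2 (b 0).2)
  calc κmap k A B X (n + 1) (ιmap k A B X (n + 1) (x ⊗ₜ[k] tprod k b))
      = κmap k A B X (n + 1) (x ⊗ₜ[k] tprod k (B.val ∘ b)) :=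
        congrArg (κmap k A B X (n + 1)) (ιmap_succ_tmul_tprod n x b)
    _ = mkRC k A B X n (x ⊗ₜ tprod k (πQ k A B ∘ B.val ∘ b)) := κmap_succ_tmul_tprod n x _
    _ = 0 := by rw [hb, map_zero]

variable {bA : ∀ n, CH k A X (n + 1) →ₗ[k] CH k A X n}

theorem ιmap_isChainMap {bB : ∀ n, CHB k A B X (n + 1) →ₗ[k] CHB k A B X n}
    (hbB : IsHochschildDiffB k A B X bB) (hbA : IsHochschildDiff k A X bA) (n : ℕ) :
    bA n ∘ₗ ιmap k A B X (n + 1) = ιmap k A B X n ∘ₗ bB n := by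
  refine CHB.hom_ext fun x b => ?_
  calc bA n (ιmap k A B X (n + 1) (x ⊗ₜ[k] tprod k b))
      = bA n (x ⊗ₜ[k] tprod k (B.val ∘ b)) := congrArg (bA n) (ιmap_succ_tmul_tprod n x b)
    _ = ιmap k A B X n (bB n (x ⊗ₜ[k] tprod k b)) := by
      cases n with
      | zero => rw [hbA.1, hbB.1]; rfl
      | succ n =>
        rw [hbA.2, hbB.2, ιmap_succ_apply, hochSucc_eq_faceSum, hochBSucc_eq_faceSum,
          tensorPowerMap_faceSum _ _ _ _ fun _ _ => rfl]
        rfl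

theorem κmap_boundary_eq_zero_of_mem (hbA : IsHochschildDiff k A X bA) {n : ℕ} (x : X)
    {a : Fin (n + 1) → A} {i : Fin (n + 1)} (hi : a i ∈ B) :
    κmap k A B X n (bA n (x ⊗ₜ[k] tprod k a)) = 0 := by
  cases n with
  | zero =>
    obtain rfl := Fin.fin_one_eq_zero i
    rw [hbA.1]
    refine (Submodule.Quotient.mk_eq_zero _).2 ?_
    rw [hochZero, ← neg_sub]
    exact neg_mem (Submodule.subset_span ⟨⟨a 0, hi⟩, x, rfl⟩)
  | succ n =>
    rw [hbA.2, κmap_succ_apply]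
    exact (Submodule.Quotient.mk_eq_zero _).2 (tensorPowerMap_πQ_hochSucc_mem_relRel x hi)

variable {σ : QM k A B →ₗ[k] A} {bR : ∀ n, RC k A B X (n + 1) →ₗ[k] RC k A B X n}

theorem κmap_boundary_section (hσ : πQ k A B ∘ₗ σ = LinearMap.id)
    (hbA : IsHochschildDiff k A X bA) (hbR : IsRelDiff k A B X σ bR) {n : ℕ} (x : X)
    (α : Fin (n + 1) → QM k A B) :
    κmap k A B X n (bA n (x ⊗ₜ[k] tprod k (σ ∘ α))) =
      bR n (mkRC k A B X n (x ⊗ₜ tprod k α)) := by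
  cases n with
  | zero => rw [hbA.1, hbR.1]; rfl
  | succ n =>
    have hπσ (q) : πQ k A B (σ q) = q := LinearMap.congr_fun hσ q
    have hcomp : πQ k A B ∘ σ ∘ α = α := funext fun i => hπσ (α i)
    rw [hbA.2, hbR.2, κmap_succ_apply, hochSucc_eq_faceSum, relSucc_eq_faceSum,
      tensorPowerMap_faceSum (mul' := fun p q => πQ k A B (σ p * σ q)), hcomp]
    · rfl
    · intro i j
      simp only [Function.comp_apply, hπσ]

theorem κmap_isChainMap (hσ : πQ k A B ∘ₗ σ = LinearMap.id)
    (hbA : IsHochschildDiff k A X bA) (hbR : IsRelDiff k A B X σ bR) (n : ℕ) :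
    bR n ∘ₗ κmap k A B X (n + 1) = κmap k A B X n ∘ₗ bA n := by
  refine CH.hom_ext fun x a => ?_
  have hmem (i) : a i - (σ ∘ πQ k A B ∘ a) i ∈ B := by
    rw [← πQ_eq_zero_iff (k := k), map_sub, sub_eq_zero]
    exact (LinearMap.congr_fun hσ _).symm
  calc bR n (κmap k A B X (n + 1) (x ⊗ₜ[k] tprod k a))
      = bR n (mkRC k A B X n (x ⊗ₜ tprod k (πQ k A B ∘ a))) :=
        congrArg (bR n) (κmap_succ_tmul_tprod n x a)
    _ = κmap k A B X n (bA n (x ⊗ₜ[k] tprod k (σ ∘ πQ k A B ∘ a))) :=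
        (κmap_boundary_section hσ hbA hbR x _).symm
    _ = κmap k A B X n (bA n (x ⊗ₜ[k] tprod k a)) :=
        (map_tmul_tprod_congr_of_sub_mem (V := A) (κmap k A B X n ∘ₗ bA n) x
          (fun _ _ => κmap_boundary_eq_zero_of_mem hbA x) hmem).symm

end ChainMaps

end JZH

/-- The fundamental short sequence
`0 → Č_*(B,X) →^ι Č_*(A,X) →^κ Č_*(A|B,X) → 0` of truncated complexes: `ι` and `κ` are chain
maps (in particular `κ` maps `Ker b_A` into `Ker b_{A|B}` in degree `1`), `ι` is injective in
every degree, `κ ∘ ι = 0` in every degree (of the truncated complexes, i.e. in degrees `≥ 1`),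
and `κ` is surjective in every degree `n ≥ 2`. -/
theorem fundamental_short_nearly_exact_sequence
    (k : Type) [Field k] (A : Type) [Ring A] [Algebra k A] (B : Subalgebra k A)
    (X : Type) [AddCommGroup X] [Module k X]
    [Module A X] [Module Aᵐᵒᵖ X] [SMulCommClass A Aᵐᵒᵖ X]
    [IsScalarTower k A X] [IsScalarTower k Aᵐᵒᵖ X]
    (σ : JZH.QM k A B →ₗ[k] A) (hσ : (JZH.πQ k A B).comp σ = LinearMap.id)
    (bB : ∀ n, JZH.CHB k A B X (n+1) →ₗ[k] JZH.CHB k A B X n)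
    (hbB : JZH.IsHochschildDiffB k A B X bB)
    (bA : ∀ n, JZH.CH k A X (n+1) →ₗ[k] JZH.CH k A X n)
    (hbA : JZH.IsHochschildDiff k A X bA)
    (bR : ∀ n, JZH.RC k A B X (n+1) →ₗ[k] JZH.RC k A B X n)
    (hbR : JZH.IsRelDiff k A B X σ bR) :
    -- `ι` is a chain map:
    (∀ n, (bA n).comp (JZH.ιmap k A B X (n+1)) = (JZH.ιmap k A B X n).comp (bB n)) ∧
    -- `κ` is a chain map:
    (∀ n, (bR n).comp (JZH.κmap k A B X (n+1)) = (JZH.κmap k A B X n).comp (bA n)) ∧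
    -- in degree `1`, `κ` maps `Ker b_A` into `Ker b_{A|B}`
    -- (so it restricts to the degree-1 terms of the truncated complexes):
    (∀ z ∈ LinearMap.ker (bA 0), JZH.κmap k A B X 1 z ∈ LinearMap.ker (bR 0)) ∧
    -- `ι` is injective in every degree:
    (∀ n, Function.Injective (JZH.ιmap k A B X n)) ∧
    -- `κ ∘ ι = 0` in every degree of the truncated complexes:
    (∀ n, (JZH.κmap k A B X (n+1)).comp (JZH.ιmap k A B X (n+1)) = 0) ∧
    -- `κ` is surjective in every degree `n ≥ 2`:
    (∀ n, Function.Surjective (JZH.κmap k A B X (n+2))) := by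
  have hκ := JZH.κmap_isChainMap hσ hbA hbR
  refine ⟨JZH.ιmap_isChainMap hbB hbA, hκ, fun z hz => ?_, JZH.ιmap_injective,
    JZH.κmap_comp_ιmap_succ, fun n => JZH.κmap_surjective (n + 2)⟩
  calc bR 0 (JZH.κmap k A B X 1 z)
      = JZH.κmap k A B X 0 (bA 0 z) := LinearMap.congr_fun (hκ 0) z
    _ = 0 := by rw [LinearMap.mem_ker.1 hz, map_zero]
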